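/- Let G be a finite supersolvable group and χ ∈ Irr(G) with χ(1) > 1. Then χ(1) is a product of at most η(χ) − 1 primes (counted with multiplicity). -/

import Mathlib

open scoped Classical BigOperators

/-- Inner product of class functions on a finite group. -/
noncomputable def charInner (G : Type) [Group G] [Fintype G] (φ ψ : G → ℂ) : ℂ :=
  (Fintype.card G : ℂ)⁻¹ * ∑ g : G, φ g * (starRingEnd ℂ) (ψ g)

/-- `χ` is the character of an irreducible complex representation of `G`. -/
def IsIrrChar (G : Type) [Group G] [Fintype G] (χ : G → ℂ) : Prop :=
  ∃ V : FDRep ℂ G, CategoryTheory.Simple V ∧ V.character = χ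

/-- The number of distinct non-principal irreducible constituents of `χ ⬝ conj χ`. -/
noncomputable def etaChar (G : Type) [Group G] [Fintype G] (χ : G → ℂ) : ℕ :=
  Set.ncard {α : G → ℂ | IsIrrChar G α ∧ α ≠ (fun _ => 1) ∧
    charInner G (fun g => χ g * (starRingEnd ℂ) (χ g)) α ≠ 0}

/-- Kernel of a character, as a set. -/
def charKer (G : Type) [Group G] (χ : G → ℂ) : Set G := {g | χ g = χ 1}

/-- Induced character from a subgroup. -/
noncomputable def indChar (K : Type) [Group K] [Fintype K] (H : Subgroup K) (φ : H → ℂ) :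
    K → ℂ := fun k =>
  (Nat.card H : ℂ)⁻¹ * ∑ x : K, if h : x⁻¹ * k * x ∈ H then φ ⟨x⁻¹ * k * x, h⟩ else 0


/-- Derived length of a group. -/
noncomputable def derivedLength (G : Type) [Group G] : ℕ :=
  sInf {n | derivedSeries G n = ⊥}

/-- A finite group is supersolvable if it has a chain of normal subgroups of `G`
from `⊥` to `⊤` with cyclic factors. -/
def IsSupersolvableGroup (G : Type) [Group G] : Prop :=
  ∃ (n : ℕ) (H : Fin (n + 1) → Subgroup G),
    (∀ i, (H i).Normal) ∧ Monotone H ∧ H 0 = ⊥ ∧ H (Fin.last n) = ⊤ ∧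
    ∀ i : Fin n, ∃ g ∈ H i.succ, H i.succ ≤ H i.castSucc ⊔ Subgroup.zpowers g

/-!
Let `ρ` afford `χ`, so that `χ * conj χ` is the character of `G` acting on `End V` by conjugation.
For a normal subgroup `N`, the `N`-fixed points of this action form the commutant of `ρ(N)`, and
they are a `G`-submodule. Whenever `M ≤ N` are normal and the commutant of `ρ(M)` is strictly larger
than that of `ρ(N)`, a simple `G`-submodule of the former outside the latter is a constituent of
`χ * conj χ` that is trivial on `M` but not on `N`.

Supersolvability refines every normal `N ≠ 1` by a normal `M < N` with `N / M` cyclic of prime order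
`p`. Descend from `N = G` along such steps, following an irreducible constituent of the restriction
of `ρ`. If the constituent stays irreducible on `M`, its degree is unchanged. Otherwise its degree
drops by the factor `p` and the commutant grows, so each prime factor of `χ(1)` uses up a
constituent of `χ * conj χ`. One more is left at the end: at the step where `ρ(N)` is not scalar but
`ρ(M)` is, the degree is already `1` because `N / M` is cyclic, and `N` acts nontrivially on
`End V`.
-/

open Module Representation

section CyclicFactors

variable {G Q : Type*} [Group G] [Group Q]

theorem exists_prime_notMem_zpowers_pow {y : G} (hy : y ≠ 1) :
    ∃ p : ℕ, p.Prime ∧ y ∉ Subgroup.zpowers (y ^ p) := by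
  have hord : orderOf y ≠ 1 := orderOf_eq_one_iff.not.2 hy
  refine ⟨(orderOf y).minFac, Nat.minFac_prime hord, fun h ↦ ?_⟩
  have hgcd := mem_zpowers_pow_iff.1 h
  rw [Nat.gcd_eq_left (Nat.minFac_dvd _)] at hgcd
  exact hord (Nat.minFac_eq_one_iff.1 hgcd)

theorem zpowers_pow_normal {y : G} (hy : (Subgroup.zpowers y).Normal) (n : ℕ) :
    (Subgroup.zpowers (y ^ n)).Normal := by
  refine ⟨?_⟩
  rintro _ ⟨k, rfl⟩ g
  obtain ⟨j, hj : y ^ j = g * y * g⁻¹⟩ := hy.conj_mem y (Subgroup.mem_zpowers y) g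
  refine ⟨j * k, ?_⟩
  calc (y ^ n) ^ (j * k) = ((y ^ j) ^ n) ^ k := by
        simp only [← zpow_natCast, ← zpow_mul]
        ring_nf
    _ = g * (y ^ n) ^ k * g⁻¹ := by rw [hj, conj_pow, conj_zpow]

theorem exists_map_mk'_eq_zpowers {L N : Subgroup G} [L.Normal] {g : G}
    (h : N ≤ L ⊔ Subgroup.zpowers g) :
    ∃ y ∈ N, N.map (QuotientGroup.mk' L) = Subgroup.zpowers (QuotientGroup.mk' L y) := by
  have hle : N.map (QuotientGroup.mk' L) ≤ Subgroup.zpowers (QuotientGroup.mk' L g) := by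
    refine (Subgroup.map_mono h).trans ?_
    rw [Subgroup.map_sup, QuotientGroup.map_mk'_self, bot_sup_eq, MonoidHom.map_zpowers]
  obtain ⟨j, hj⟩ := (Subgroup.le_zpowers_iff _ _).1 hle
  obtain ⟨y, hy, hyj⟩ := hj.ge (Subgroup.mem_zpowers _)
  exact ⟨y, hy, by rw [hj, ← hyj]⟩

theorem exists_normal_lt_of_map_eq_zpowers {f : G →* Q} (hf : Function.Surjective f)
    {N : Subgroup G} [hN : N.Normal] {y : G} (hyN : y ∈ N)
    (hmap : N.map f = Subgroup.zpowers (f y)) (hy : f y ≠ 1) :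
    ∃ M : Subgroup G, M.Normal ∧ M < N ∧ N ≤ M ⊔ Subgroup.zpowers y ∧
      ∃ p : ℕ, p.Prime ∧ y ^ p ∈ M := by
  obtain ⟨p, hp, hyp⟩ := exists_prime_notMem_zpowers_pow hy
  have hnormal := zpowers_pow_normal (hmap ▸ hN.map f hf) p
  have hyM : y ∉ N ⊓ (Subgroup.zpowers (f y ^ p)).comap f := fun h ↦ hyp h.2
  refine ⟨N ⊓ (Subgroup.zpowers (f y ^ p)).comap f, inferInstance,
    lt_of_le_of_ne inf_le_left fun h ↦ hyM (h.ge hyN), fun n hn ↦ ?_, p, hp, N.pow_mem hyN p, ?_⟩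
  · obtain ⟨k, hk : f y ^ k = f n⟩ := hmap.le ⟨n, hn, rfl⟩
    have hker : f (n * (y ^ k)⁻¹) = 1 := by
      rw [map_mul, map_inv, map_zpow, hk, mul_inv_cancel]
    rw [← inv_mul_cancel_right n (y ^ k)]
    refine Subgroup.mul_mem_sup ⟨N.mul_mem hn (N.inv_mem (N.zpow_mem hyN k)), ?_⟩ ⟨k, rfl⟩
    exact Subgroup.mem_comap.2 (hker ▸ Subgroup.one_mem _)
  · simp [Subgroup.mem_zpowers]

end CyclicFactors

theorem exists_normal_lt_of_isSupersolvableGroup {G : Type} [Group G]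
    (hG : IsSupersolvableGroup G) {N : Subgroup G} [N.Normal] (hN : N ≠ ⊥) :
    ∃ M : Subgroup G, M.Normal ∧ M < N ∧ ∃ x ∈ N, N ≤ M ⊔ Subgroup.zpowers x ∧
      ∃ p : ℕ, p.Prime ∧ x ^ p ∈ M := by
  obtain ⟨n, H, hnormal, -, hbot, htop, hcyclic⟩ := hG
  obtain ⟨i, hsucc, hcast⟩ : ∃ i : Fin n, N ≤ H i.succ ∧ ¬ N ≤ H i.castSucc := by
    by_contra! h
    have hle (i : Fin (n + 1)) : N ≤ H i := by
      induction i using Fin.reverseInduction with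
      | last => exact htop ▸ le_top
      | cast i ih => exact h i ih
    exact hN (le_bot_iff.1 (hbot ▸ hle 0))
  have := hnormal i.castSucc
  obtain ⟨g, -, hg⟩ := hcyclic i
  obtain ⟨y, hyN, hmap⟩ := exists_map_mk'_eq_zpowers (hsucc.trans hg)
  have hy : QuotientGroup.mk' (H i.castSucc) y ≠ 1 := fun h ↦ hcast <| by
    rwa [h, Subgroup.zpowers_one_eq_bot, Subgroup.map_eq_bot_iff, QuotientGroup.ker_mk'] at hmap
  obtain ⟨M, hM, hMN, hsup, hp⟩ := exists_normal_lt_of_map_eq_zpowers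
    (QuotientGroup.mk'_surjective _) hyN hmap hy
  exact ⟨M, hM, hMN, y, hyN, hsup, hp⟩

section InvariantSubspaces

variable {k G V W : Type*} [Field k] [Group G] [AddCommGroup V] [Module k V] [AddCommGroup W]
  [Module k W]

theorem isIrreducible_iff_forall_mem_invtSubmodule [Nontrivial V] {ρ : Representation k G V} :
    ρ.IsIrreducible ↔ ∀ S ∈ ρ.invtSubmodule, S = ⊥ ∨ S = ⊤ := by
  constructor
  · intro hρ S hS
    refine (hρ.eq_bot_or_eq_top ⟨S, fun g _ hv ↦ ρ.mem_invtSubmodule.1 hS g hv⟩).imp ?_ ?_ <;>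
      exact congrArg Subrepresentation.toSubmodule
  · intro h
    have : Nontrivial (Subrepresentation ρ) :=
      ⟨⊥, ⊤, fun h ↦ bot_ne_top (α := Submodule k V) (congrArg Subrepresentation.toSubmodule h)⟩
    refine ⟨fun S ↦ (h S.toSubmodule (ρ.mem_invtSubmodule.2 S.apply_mem_toSubmodule)).imp ?_ ?_⟩ <;>
      exact fun hS ↦ Subrepresentation.toSubmodule_injective hS

theorem nontrivial_of_isIrreducible (ρ : Representation k G V) [ρ.IsIrreducible] :
    Nontrivial V := by
  by_contra h
  rw [not_nontrivial_iff_subsingleton] at h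
  exact bot_ne_top (Subrepresentation.toSubmodule_injective
    (Subsingleton.elim (⊥ : Subrepresentation ρ).toSubmodule (⊤ : Subrepresentation ρ).toSubmodule))

theorem map_mem_invtSubmodule_iff {ρ : Representation k G V} {σ : Representation k G W}
    (f : IntertwiningMap σ ρ) (hf : Function.Injective f) {S : Submodule k W} :
    S.map f.toLinearMap ∈ ρ.invtSubmodule ↔ S ∈ σ.invtSubmodule := by
  simp only [mem_invtSubmodule, End.mem_invtSubmodule]
  refine forall_congr' fun g ↦ ⟨fun h w hw ↦ ?_, ?_⟩
  · obtain ⟨w', hw', hww'⟩ := h ⟨w, hw, rfl⟩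
    obtain rfl : w' = σ g w := hf (hww'.trans (f.isIntertwining _ _ g w).symm)
    exact hw'
  · rintro h _ ⟨w, hw, rfl⟩
    exact ⟨σ g w, h hw, f.isIntertwining _ _ g w⟩

theorem mem_invtSubmodule_of_sup_zpowers_eq_top [Finite G] {ρ : Representation k G V}
    {M : Subgroup G} [M.Normal] {x : G} (hgen : M ⊔ Subgroup.zpowers x = ⊤) {S : Submodule k V}
    (hM : S ∈ invtSubmodule (ρ.comp M.subtype)) (hx : S ∈ End.invtSubmodule (ρ x)) :
    S ∈ ρ.invtSubmodule := by
  refine ρ.mem_invtSubmodule.2 fun g ↦ ?_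
  obtain ⟨m, hm, y, hy, rfl⟩ :=
    Subgroup.mem_sup_of_normal_left.1 (hgen ▸ Subgroup.mem_top g : g ∈ M ⊔ Subgroup.zpowers x)
  obtain ⟨n, rfl⟩ := mem_powers_iff_mem_zpowers.2 hy
  have hxn : S ≤ S.comap (ρ x ^ n) := S.le_comap_pow_of_le_comap hx n
  intro v hv
  simpa using (mem_invtSubmodule _).1 hM ⟨m, hm⟩ (hxn hv)

end InvariantSubspaces

section Semisimplicity

variable {k G V : Type*} [Field k] [Group G] [AddCommGroup V] [Module k V]
  {ρ : Representation k G V}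

theorem isAtom_iff_forall_mem_invtSubmodule {U : Subrepresentation ρ} :
    IsAtom U ↔ U.toSubmodule ≠ ⊥ ∧
      ∀ S ∈ ρ.invtSubmodule, S ≤ U.toSubmodule → S = ⊥ ∨ S = U.toSubmodule := by
  have hinj := Subrepresentation.toSubmodule_injective (ρ := ρ)
  refine ⟨fun hU ↦ ⟨fun h ↦ hU.1 (hinj h), fun S hS hSU ↦ ?_⟩, fun ⟨hU, h⟩ ↦ ?_⟩
  · let T : Subrepresentation ρ := ⟨S, ρ.mem_invtSubmodule.1 hS⟩
    have hTU : T ≤ U := hSU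
    exact (hU.le_iff.1 hTU).imp (congrArg Subrepresentation.toSubmodule)
      (congrArg Subrepresentation.toSubmodule)
  · refine isAtom_iff_le_of_ge.2 ⟨fun h ↦ hU (congrArg Subrepresentation.toSubmodule h),
      fun T hT hTU ↦ ?_⟩
    exact ((h _ (ρ.mem_invtSubmodule.2 T.apply_mem_toSubmodule) hTU).resolve_left
      fun hbot ↦ hT (hinj hbot)).ge

theorem isIrreducible_toRepresentation_of_isAtom {U : Subrepresentation ρ} (hU : IsAtom U) :
    U.toRepresentation.IsIrreducible := by
  obtain ⟨hbot, hmin⟩ := isAtom_iff_forall_mem_invtSubmodule.1 hU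
  have : Nontrivial U.toSubmodule := Submodule.nontrivial_iff_ne_bot.2 hbot
  let ι : IntertwiningMap U.toRepresentation ρ := ⟨U.toSubmodule.subtype, fun _ ↦ rfl⟩
  have hinj := Submodule.map_injective_of_injective U.toSubmodule.subtype_injective
  refine isIrreducible_iff_forall_mem_invtSubmodule.2 fun S hS ↦ ?_
  have hmap := (map_mem_invtSubmodule_iff ι U.toSubmodule.subtype_injective).2 hS
  refine (hmin _ hmap (Submodule.map_subtype_le _ S)).imp (fun h ↦ ?_) fun h ↦ ?_
  · exact hinj (h.trans (Submodule.map_bot _).symm)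
  · exact hinj (h.trans (Submodule.map_subtype_top _).symm)

variable [Finite G] [NeZero (Nat.card G : k)]

theorem exists_isAtom_le_not_le {S T : Subrepresentation ρ} (h : ¬ S ≤ T) :
    ∃ U, IsAtom U ∧ U ≤ S ∧ ¬ U ≤ T := by
  let e := Subrepresentation.subrepresentationSubmoduleOrderIso (ρ := ρ)
  rw [← e.le_iff_le, le_iff_atom_le_imp] at h
  push Not at h
  obtain ⟨U, hU, hUS, hUT⟩ := h
  exact ⟨e.symm U, (e.symm.isAtom_iff U).2 hU, hUS, hUT⟩

theorem exists_intertwiningMap_isProj (S : Subrepresentation ρ) :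
    ∃ π : IntertwiningMap ρ ρ, LinearMap.IsProj S.toSubmodule π.toLinearMap := by
  obtain ⟨f, hf⟩ := MonoidAlgebra.exists_leftInverse_of_injective S.asSubmodule.subtype
    S.asSubmodule.ker_subtype
  let π := (IntertwiningMap.equivLinearMapAsModule ρ ρ).symm (S.asSubmodule.subtype ∘ₗ f)
  exact ⟨π, fun v ↦ (f v).2, fun v hv ↦ congrArg Subtype.val (LinearMap.congr_fun hf ⟨v, hv⟩)⟩

end Semisimplicity

section Commutant

variable {k G V : Type*} [Field k] [Group G] [AddCommGroup V] [Module k V]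

/-- The commutant of `ρ(N)`, i.e. the endomorphisms of `V` commuting with `ρ n` for all `n ∈ N`,
encoded as the `N`-invariants of the conjugation action `linHom ρ ρ` of `G` on `End V`. -/
noncomputable def commutant (ρ : Representation k G V) (N : Subgroup G) : Submodule k (V →ₗ[k] V) :=
  invariants ((linHom ρ ρ).comp N.subtype)

variable {ρ : Representation k G V}

theorem linHom_self_apply_eq_smul_iff {g : G} {f : V →ₗ[k] V} {c : k} :
    linHom ρ ρ g f = c • f ↔ ∀ v, ρ g (f v) = c • f (ρ g v) := by
  constructor
  · intro h v
    simpa using LinearMap.congr_fun h (ρ g v)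
  · intro h
    ext v
    simp [h]

theorem apply_comm_of_mem_commutant {N : Subgroup G} {f : V →ₗ[k] V} (hf : f ∈ commutant ρ N)
    {n : G} (hn : n ∈ N) (v : V) : ρ n (f v) = f (ρ n v) := by
  have h : linHom ρ ρ n f = (1 : k) • f := (hf ⟨n, hn⟩).trans (one_smul k f).symm
  simpa using linHom_self_apply_eq_smul_iff.1 h v

theorem toLinearMap_mem_commutant {N : Subgroup G}
    (f : IntertwiningMap (ρ.comp N.subtype) (ρ.comp N.subtype)) :
    f.toLinearMap ∈ commutant ρ N :=
  ((invariantsEquivIntertwiningMap _ _).symm f).2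

theorem mem_invtSubmodule_of_forall_mem_commutant {M : Subgroup G} [Finite M]
    [NeZero (Nat.card M : k)] {g : G} (hg : ∀ f ∈ commutant ρ M, linHom ρ ρ g f = f)
    {S : Submodule k V} (hS : S ∈ invtSubmodule (ρ.comp M.subtype)) :
    S ∈ End.invtSubmodule (ρ g) := by
  obtain ⟨π, hπ⟩ := exists_intertwiningMap_isProj
    (⟨S, (mem_invtSubmodule _).1 hS⟩ : Subrepresentation (ρ.comp M.subtype))
  have hfix : linHom ρ ρ g π.toLinearMap = (1 : k) • π.toLinearMap :=
    (hg _ (toLinearMap_mem_commutant π)).trans (one_smul k _).symm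
  intro v hv
  have hgv : ρ g v = π.toLinearMap (ρ g v) := by
    simpa [hπ.map_id v hv] using linHom_self_apply_eq_smul_iff.1 hfix v
  rw [Submodule.mem_comap, hgv]
  exact hπ.map_mem (ρ g v)

theorem invtSubmodule_le_of_commutant_le {M N : Subgroup G} [Finite M] [NeZero (Nat.card M : k)]
    (h : commutant ρ M ≤ commutant ρ N) :
    invtSubmodule (ρ.comp M.subtype) ≤ invtSubmodule (ρ.comp N.subtype) := fun _ hS ↦
  (mem_invtSubmodule _).2 fun n ↦
    mem_invtSubmodule_of_forall_mem_commutant (fun _ hf ↦ h hf n) hS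

theorem mem_invtSubmodule_of_commutant_bot_le {N : Subgroup G}
    (h : commutant ρ ⊥ ≤ commutant ρ N) (S : Submodule k V) :
    S ∈ invtSubmodule (ρ.comp N.subtype) := by
  have : NeZero (Nat.card (⊥ : Subgroup G) : k) := ⟨by simp⟩
  refine invtSubmodule_le_of_commutant_le h ((mem_invtSubmodule _).2 fun ⟨g, hg⟩ v hv ↦ ?_)
  obtain rfl := Subgroup.mem_bot.1 hg
  simpa using hv

end Commutant

theorem exists_hasEigenvector_ne_one {k A : Type*} [Field k] [IsAlgClosed k] [AddCommGroup A]
    [Module k A] [FiniteDimensional k A] {T : End k A} {n : ℕ} (hn : (n : k) ≠ 0) (hTn : T ^ n = 1)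
    (hT : T ≠ 1) : ∃ ζ : k, ζ ≠ 1 ∧ ζ ^ n = 1 ∧ ∃ a, T.HasEigenvector ζ a := by
  have hss : T.IsSemisimple := by
    refine End.isSemisimple_of_squarefree_aeval_eq_zero (p := Polynomial.X ^ n - 1)
      (Polynomial.X_pow_sub_one_separable_iff.2 hn).squarefree ?_
    simp [hTn]
  obtain ⟨ζ, hζ, hζT⟩ : ∃ ζ ≠ 1, T.HasEigenvalue ζ := by
    by_contra! h
    have htop : T.eigenspace 1 = ⊤ := by
      rw [eq_top_iff, ← hss.iSup_eigenspace_eq_top]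
      refine iSup_le fun ζ ↦ ?_
      by_cases hζ : ζ = 1
      · rw [hζ]
      · simp [not_not.1 (h ζ hζ)]
    refine hT (LinearMap.ext fun v ↦ ?_)
    simpa using End.mem_eigenspace_iff.1 (htop ▸ Submodule.mem_top : v ∈ T.eigenspace 1)
  obtain ⟨a, ha⟩ := hζT.exists_hasEigenvector
  refine ⟨ζ, hζ, ?_, a, ha⟩
  have h : (ζ ^ n - 1) • a = 0 := by
    rw [sub_smul, ← ha.pow_apply, hTn]
    simp
  exact sub_eq_zero.1 ((smul_eq_zero.1 h).resolve_right ha.2)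

section CyclicExtension

variable {k G W : Type*} [Field k] [Group G] [AddCommGroup W] [Module k W]
  {σ : Representation k G W} {M : Subgroup G} {x : G}

theorem map_eigenspace_le_of_linHom_apply_eq_smul {g : G} {a : End k W} {c : k} (hc : c ≠ 0)
    (hga : linHom σ σ g a = c • a) (μ : k) :
    (a.eigenspace μ).map (σ g) ≤ a.eigenspace (c⁻¹ * μ) := by
  rintro _ ⟨v, hv, rfl⟩
  have h := linHom_self_apply_eq_smul_iff.1 hga v
  rw [End.mem_eigenspace_iff.1 hv, map_smul] at h
  rw [End.mem_eigenspace_iff, mul_smul, h, inv_smul_smul₀ hc]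

theorem iSupIndep_map_pow_of_le_eigenspace {a : End k W} {ζ μ : k} {p : ℕ}
    (hζ : IsPrimitiveRoot ζ p) (ha : linHom σ σ x a = ζ • a) (hμ : μ ≠ 0) {U : Submodule k W}
    (hU : U ≤ a.eigenspace μ) : iSupIndep fun i : Fin p ↦ U.map (σ (x ^ (i : ℕ))) := by
  have hpow (i : ℕ) : linHom σ σ (x ^ i) a = ζ ^ i • a := by
    induction i with
    | zero => simp
    | succ i ih => rw [pow_succ, map_mul, End.mul_apply, ha, map_smul, ih, smul_smul, pow_succ']
  have hinj : Function.Injective fun i : Fin p ↦ (ζ ^ (i : ℕ))⁻¹ * μ := fun i j hij ↦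
    Fin.ext (hζ.pow_inj i.2 j.2 (inv_injective (mul_right_cancel₀ hμ hij)))
  refine (a.eigenspaces_iSupIndep.comp hinj).mono fun i ↦ ?_
  have hζi : ζ ^ (i : ℕ) ≠ 0 := pow_ne_zero _ (hζ.ne_zero i.pos.ne')
  exact (Submodule.map_mono hU).trans (map_eigenspace_le_of_linHom_apply_eq_smul hζi (hpow i) μ)

theorem eigenspace_mem_invtSubmodule_of_mem_commutant {a : End k W} (ha : a ∈ commutant σ M)
    (μ : k) : a.eigenspace μ ∈ invtSubmodule (σ.comp M.subtype) := by
  refine (mem_invtSubmodule _).2 fun m v hv ↦ End.mem_eigenspace_iff.2 ?_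
  have h := apply_comm_of_mem_commutant ha m.2 v
  rw [End.mem_eigenspace_iff.1 hv, map_smul] at h
  exact h.symm

theorem map_pow_le_iSup_map_pow {p : ℕ} (hp : 0 < p) (hxp : x ^ p ∈ M) {U : Submodule k W}
    (hU : U ∈ invtSubmodule (σ.comp M.subtype)) (n : ℕ) :
    U.map (σ (x ^ n)) ≤ ⨆ i : Fin p, U.map (σ (x ^ (i : ℕ))) := by
  refine le_trans ?_ (le_iSup _ (⟨n % p, Nat.mod_lt n hp⟩ : Fin p))
  rintro _ ⟨v, hv, rfl⟩
  refine ⟨σ ((x ^ p) ^ (n / p)) v,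
    (mem_invtSubmodule _).1 hU ⟨_, M.pow_mem hxp (n / p)⟩ hv, ?_⟩
  rw [← End.mul_apply, ← map_mul, ← pow_mul, ← pow_add, Nat.mod_add_div]

variable [M.Normal]

theorem map_mem_invtSubmodule_of_normal {U : Submodule k W}
    (hU : U ∈ invtSubmodule (σ.comp M.subtype)) (g : G) :
    U.map (σ g) ∈ invtSubmodule (σ.comp M.subtype) := by
  rw [mem_invtSubmodule] at hU ⊢
  rintro ⟨m, hm⟩ _ ⟨v, hv, rfl⟩
  refine ⟨σ (g⁻¹ * m * g) v, hU ⟨_, Subgroup.Normal.conj_mem' ‹_› m hm g⟩ hv, ?_⟩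
  simp

theorem isIrreducible_comp_subtype_of_forall_mem_commutant [Finite G] [NeZero (Nat.card M : k)]
    [σ.IsIrreducible] (hgen : M ⊔ Subgroup.zpowers x = ⊤)
    (hx : ∀ f ∈ commutant σ M, linHom σ σ x f = f) :
    IsIrreducible (σ.comp M.subtype) := by
  have := nontrivial_of_isIrreducible σ
  exact isIrreducible_iff_forall_mem_invtSubmodule.2 fun S hS ↦
    isIrreducible_iff_forall_mem_invtSubmodule.1 ‹_› S (mem_invtSubmodule_of_sup_zpowers_eq_top hgen
      hS (mem_invtSubmodule_of_forall_mem_commutant hx hS))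

theorem eigenspace_zero_eq_bot_of_linHom_apply_eq_smul [Finite G] [σ.IsIrreducible]
    (hgen : M ⊔ Subgroup.zpowers x = ⊤) {a : End k W} (haM : a ∈ commutant σ M) (ha0 : a ≠ 0)
    {ζ : k} (hζ : ζ ≠ 0) (ha : linHom σ σ x a = ζ • a) : a.eigenspace 0 = ⊥ := by
  have := nontrivial_of_isIrreducible σ
  have hx : a.eigenspace 0 ∈ End.invtSubmodule (σ x) := by
    simpa [End.mem_invtSubmodule_iff_map_le]
      using map_eigenspace_le_of_linHom_apply_eq_smul hζ ha 0
  refine (isIrreducible_iff_forall_mem_invtSubmodule.1 ‹_› _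
    (mem_invtSubmodule_of_sup_zpowers_eq_top hgen
      (eigenspace_mem_invtSubmodule_of_mem_commutant haM 0) hx)).resolve_right fun h ↦ ha0 ?_
  simpa [LinearMap.ker_eq_top] using h

theorem iSup_map_pow_eq_top [Finite G] [σ.IsIrreducible] (hgen : M ⊔ Subgroup.zpowers x = ⊤)
    {p : ℕ} (hp : 0 < p) (hxp : x ^ p ∈ M) {U : Submodule k W} (hU0 : U ≠ ⊥)
    (hU : U ∈ invtSubmodule (σ.comp M.subtype)) :
    ⨆ i : Fin p, U.map (σ (x ^ (i : ℕ))) = ⊤ := by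
  have := nontrivial_of_isIrreducible σ
  have hM : ⨆ i : Fin p, U.map (σ (x ^ (i : ℕ))) ∈ invtSubmodule (σ.comp M.subtype) := by
    refine (mem_invtSubmodule _).2 fun m ↦ (End.mem_invtSubmodule _).2 (iSup_le fun i ↦ ?_)
    exact ((mem_invtSubmodule _).1 (map_mem_invtSubmodule_of_normal hU _) m).trans
      (Submodule.comap_mono (le_iSup (fun i : Fin p ↦ U.map (σ (x ^ (i : ℕ)))) i))
  have hx : ⨆ i : Fin p, U.map (σ (x ^ (i : ℕ))) ∈ End.invtSubmodule (σ x) := by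
    refine (End.mem_invtSubmodule _).2 (iSup_le fun i ↦ ?_)
    rintro _ ⟨v, hv, rfl⟩
    refine map_pow_le_iSup_map_pow hp hxp hU (i + 1) ⟨v, hv, ?_⟩
    rw [pow_succ', map_mul, End.mul_apply]
  refine (isIrreducible_iff_forall_mem_invtSubmodule.1 ‹_› _
    (mem_invtSubmodule_of_sup_zpowers_eq_top hgen hM hx)).resolve_left fun h ↦ hU0 ?_
  simpa [End.one_eq_id] using (map_pow_le_iSup_map_pow hp hxp hU 0).trans h.le

variable [FiniteDimensional k W]

theorem finrank_eq_mul_of_le_eigenspace [Finite G] [σ.IsIrreducible]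
    (hgen : M ⊔ Subgroup.zpowers x = ⊤) {p : ℕ} (hp : 0 < p) (hxp : x ^ p ∈ M) {a : End k W}
    {ζ μ : k} (hζ : IsPrimitiveRoot ζ p) (ha : linHom σ σ x a = ζ • a) (hμ : μ ≠ 0)
    {U : Submodule k W} (hU0 : U ≠ ⊥) (hU : U ∈ invtSubmodule (σ.comp M.subtype))
    (hUa : U ≤ a.eigenspace μ) : finrank k W = p * finrank k U := by
  have hfin (i : Fin p) : finrank k (U.map (σ (x ^ (i : ℕ)))) = finrank k U :=
    (LinearEquiv.finrank_eq (U.equivMapOfInjective _ (apply_bijective σ _).injective)).symm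
  have hint : DirectSum.IsInternal fun i : Fin p ↦ U.map (σ (x ^ (i : ℕ))) :=
    DirectSum.isInternal_submodule_of_iSupIndep_of_iSup_eq_top
      (iSupIndep_map_pow_of_le_eigenspace hζ ha hμ hUa) (iSup_map_pow_eq_top hgen hp hxp hU0 hU)
  rw [← (LinearEquiv.ofBijective (DirectSum.coeLinearMap _) hint).finrank_eq, finrank_directSum]
  simp [hfin]

variable [IsAlgClosed k]

theorem finrank_eq_one_of_forall_mem_invtSubmodule [Finite G] [σ.IsIrreducible]
    (hgen : M ⊔ Subgroup.zpowers x = ⊤)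
    (h : ∀ S : Submodule k W, S ∈ invtSubmodule (σ.comp M.subtype)) : finrank k W = 1 := by
  have := nontrivial_of_isIrreducible σ
  obtain ⟨μ, hμ⟩ := End.exists_eigenvalue (σ x)
  obtain ⟨v, hv⟩ := hμ.exists_hasEigenvector
  have hx : k ∙ v ∈ End.invtSubmodule (σ x) := by
    rw [End.mem_invtSubmodule, Submodule.span_singleton_le_iff_mem, Submodule.mem_comap,
      hv.apply_eq_smul]
    exact Submodule.smul_mem _ _ (Submodule.mem_span_singleton_self v)
  have htop : k ∙ v = ⊤ := (isIrreducible_iff_forall_mem_invtSubmodule.1 ‹_› _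
    (mem_invtSubmodule_of_sup_zpowers_eq_top hgen (h _) hx)).resolve_left
      (Submodule.span_singleton_eq_bot.not.2 hv.2)
  rw [← finrank_top k W, ← htop, finrank_span_singleton hv.2]

theorem exists_mem_invariants_apply_eq_smul {p : ℕ} (hp : (p : k) ≠ 0) (hxp : x ^ p ∈ M) {f : W}
    (hf : f ∈ invariants (σ.comp M.subtype)) (hfx : σ x f ≠ f) :
    ∃ ζ : k, ζ ≠ 1 ∧ ζ ^ p = 1 ∧ ∃ a ∈ invariants (σ.comp M.subtype), a ≠ 0 ∧ σ x a = ζ • a := by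
  have hTp : toInvariants σ M x ^ p = 1 := by
    rw [← map_pow]
    exact LinearMap.ext fun a ↦ Subtype.ext (a.2 ⟨x ^ p, hxp⟩)
  have hT : toInvariants σ M x ≠ 1 := fun h ↦
    hfx (congrArg Subtype.val (LinearMap.congr_fun h ⟨f, hf⟩))
  obtain ⟨ζ, hζ, hζp, a, ha⟩ := exists_hasEigenvector_ne_one hp hTp hT
  exact ⟨ζ, hζ, hζp, a, a.2, fun h ↦ ha.2 (Subtype.ext h), congrArg Subtype.val ha.apply_eq_smul⟩

theorem isIrreducible_or_exists_finrank_eq_mul [Finite G] [CharZero k] [σ.IsIrreducible]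
    (hgen : M ⊔ Subgroup.zpowers x = ⊤) {p : ℕ} (hp : p.Prime) (hxp : x ^ p ∈ M) :
    IsIrreducible (σ.comp M.subtype) ∨
      ∃ U : Subrepresentation (σ.comp M.subtype),
        U.toRepresentation.IsIrreducible ∧ finrank k W = p * finrank k U.toSubmodule := by
  have : NeZero (Nat.card M : k) := ⟨Nat.cast_ne_zero.2 Nat.card_pos.ne'⟩
  have := nontrivial_of_isIrreducible σ
  by_cases hfix : ∀ f ∈ commutant σ M, linHom σ σ x f = f
  · exact .inl (isIrreducible_comp_subtype_of_forall_mem_commutant hgen hfix)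
  push Not at hfix
  obtain ⟨f, hfM, hfx⟩ := hfix
  obtain ⟨ζ, hζ1, hζp, a, haM, ha0, hax⟩ :=
    exists_mem_invariants_apply_eq_smul (Nat.cast_ne_zero.2 hp.ne_zero) hxp hfM hfx
  have hζ : IsPrimitiveRoot ζ p := by
    have := Fact.mk hp
    exact orderOf_eq_prime hζp hζ1 ▸ IsPrimitiveRoot.orderOf ζ
  obtain ⟨μ, hμ⟩ := End.exists_eigenvalue a
  have hμ0 : μ ≠ 0 := by
    rintro rfl
    exact hμ (eigenspace_zero_eq_bot_of_linHom_apply_eq_smul hgen haM ha0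
      (hζ.ne_zero hp.ne_zero) hax)
  let E : Subrepresentation (σ.comp M.subtype) := ⟨End.eigenspace a μ,
    (mem_invtSubmodule _).1 (eigenspace_mem_invtSubmodule_of_mem_commutant haM μ)⟩
  obtain ⟨U, hU, hUE, -⟩ := exists_isAtom_le_not_le (S := E) (T := ⊥)
    fun h ↦ hμ (le_bot_iff.1 (show End.eigenspace a μ ≤ ⊥ from h))
  have hU0 : U.toSubmodule ≠ ⊥ := fun h ↦ hU.1 (Subrepresentation.toSubmodule_injective h)
  exact .inr ⟨U, isIrreducible_toRepresentation_of_isAtom hU,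
    finrank_eq_mul_of_le_eigenspace hgen hp.pos hxp hζ hax hμ0 hU0
      ((mem_invtSubmodule _).2 U.apply_mem_toSubmodule) hUE⟩

end CyclicExtension

section ComplexCharacters

theorem isIrreducible_iff_finrank_intertwiningMap_self_eq_one {k G V : Type*} [Field k]
    [IsAlgClosed k] [Group G] [Finite G] [NeZero (Nat.card G : k)] [AddCommGroup V] [Module k V]
    [FiniteDimensional k V] {ρ : Representation k G V} :
    ρ.IsIrreducible ↔ finrank k (IntertwiningMap ρ ρ) = 1 := by
  refine ⟨fun _ ↦ IsIrreducible.finrank_intertwiningMap_self ρ, fun h ↦ ?_⟩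
  have hV : Nontrivial V := by
    by_contra hV
    rw [not_nontrivial_iff_subsingleton] at hV
    have : Subsingleton (IntertwiningMap ρ ρ) := ⟨fun f g ↦ DFunLike.ext f g fun _ ↦
      Subsingleton.elim _ _⟩
    exact zero_ne_one (finrank_zero_of_subsingleton.symm.trans h)
  have hid : (1 : IntertwiningMap ρ ρ) ≠ 0 := fun h1 ↦ by
    obtain ⟨v, hv⟩ := exists_ne (0 : V)
    exact hv (DFunLike.congr_fun h1 v)
  refine isIrreducible_iff_forall_mem_invtSubmodule.2 fun S hS ↦ ?_
  obtain ⟨π, hπ⟩ := exists_intertwiningMap_isProj ⟨S, ρ.mem_invtSubmodule.1 hS⟩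
  obtain ⟨c, rfl⟩ := (finrank_eq_one_iff_of_nonzero' _ hid).1 h π
  rcases eq_or_ne c 0 with rfl | hc
  · exact .inl (S.eq_bot_iff.2 fun v hv ↦ (hπ.map_id v hv).symm.trans (zero_smul k v))
  · refine .inr (Submodule.eq_top_iff'.2 fun v ↦ ?_)
    exact (Submodule.smul_mem_iff S hc).1 (hπ.map_mem v)

theorem simple_iff_isIrreducible.{u} {k G : Type u} [Field k] [IsAlgClosed k] [Group G] [Finite G]
    [NeZero (Nat.card G : k)] {V : FDRep k G} : CategoryTheory.Simple V ↔ IsIrreducible V.ρ := by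
  rw [FDRep.simple_iff_end_is_rank_one, isIrreducible_iff_finrank_intertwiningMap_self_eq_one,
    ← (linHom.invariantsEquivFDRepHom V V).finrank_eq,
    (invariantsEquivIntertwiningMap V.ρ V.ρ).finrank_eq]

open scoped ComplexOrder in
theorem exists_posDef_conjTranspose_mul_mul_eq {G n : Type*} [Group G] [Finite G] [Fintype n]
    [DecidableEq n] (A : G →* Matrix n n ℂ) :
    ∃ P : Matrix n n ℂ, P.PosDef ∧ ∀ g, (A g).conjTranspose * P * A g = P := by
  have := Fintype.ofFinite G
  refine ⟨∑ h : G, (A h).conjTranspose * A h, ?_, fun g ↦ ?_⟩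
  · exact Matrix.posDef_sum Finset.univ_nonempty fun h _ ↦ Matrix.PosDef.conjTranspose_mul_self _
      (Matrix.mulVec_injective_of_isUnit ((Group.isUnit h).map A))
  · rw [Finset.mul_sum, Finset.sum_mul]
    refine Fintype.sum_equiv (Equiv.mulRight g) _ _ fun h ↦ ?_
    simp [Matrix.conjTranspose_mul, Matrix.mul_assoc]

open scoped ComplexOrder in
theorem trace_apply_inv {G n : Type*} [Group G] [Finite G] [Fintype n] [DecidableEq n]
    (A : G →* Matrix n n ℂ) (g : G) : (A g⁻¹).trace = star (A g).trace := by
  obtain ⟨P, hP, hinv⟩ := exists_posDef_conjTranspose_mul_mul_eq A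
  have hdet : IsUnit P.det := (Matrix.isUnit_iff_isUnit_det _).1 hP.isUnit
  have hconj : (A g).conjTranspose * P = P * A g⁻¹ := by
    rw [← Matrix.mul_one ((A g).conjTranspose * P), ← map_one A, ← mul_inv_cancel g, map_mul,
      ← Matrix.mul_assoc, hinv g]
  calc (A g⁻¹).trace = (P⁻¹ * (P * A g⁻¹)).trace := by rw [P.nonsing_inv_mul_cancel_left _ hdet]
    _ = (A g).conjTranspose.trace := by
      rw [← hconj, Matrix.trace_mul_comm, P.mul_nonsing_inv_cancel_right _ hdet]
    _ = star (A g).trace := Matrix.trace_conjTranspose _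

theorem character_apply_inv {G V : Type*} [Group G] [Finite G] [AddCommGroup V] [Module ℂ V]
    [FiniteDimensional ℂ V] (ρ : Representation ℂ G V) (g : G) :
    ρ.character g⁻¹ = starRingEnd ℂ (ρ.character g) := by
  let b := finBasis ℂ V
  have htrace (g : G) : ρ.character g = (LinearMap.toMatrixAlgEquiv b (ρ g)).trace :=
    LinearMap.trace_eq_matrix_trace ℂ b (ρ g)
  rw [htrace, htrace]
  exact trace_apply_inv ((MonoidHomClass.toMonoidHom (LinearMap.toMatrixAlgEquiv b)).comp ρ) g

theorem character_linHom_self {G V : Type*} [Group G] [Finite G] [AddCommGroup V] [Module ℂ V]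
    [FiniteDimensional ℂ V] (ρ : Representation ℂ G V) :
    (linHom ρ ρ).character = fun g ↦ ρ.character g * starRingEnd ℂ (ρ.character g) := by
  ext g
  rw [char_linHom, character_apply_inv, mul_comm]

variable {G : Type} [Group G] [Fintype G]

theorem isIrrChar_character {V : Type} [AddCommGroup V] [Module ℂ V] [FiniteDimensional ℂ V]
    (ρ : Representation ℂ G V) [ρ.IsIrreducible] : IsIrrChar G ρ.character :=
  ⟨FDRep.of ρ, simple_iff_isIrreducible.2 ‹_›, rfl⟩

theorem charInner_character {V W : Type*} [AddCommGroup V] [Module ℂ V] [FiniteDimensional ℂ V]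
    [AddCommGroup W] [Module ℂ W] [FiniteDimensional ℂ W] (ρ : Representation ℂ G V)
    (σ : Representation ℂ G W) :
    charInner G σ.character ρ.character = finrank ℂ (IntertwiningMap ρ σ) := by
  have : Invertible (Nat.card G : ℂ) := invertibleOfNonzero (NeZero.ne _)
  rw [← card_inv_mul_sum_char_mul_char_eq_finrank, charInner, Nat.card_eq_fintype_card]
  simp only [character_apply_inv]

theorem charInner_eq_ite {α β : G → ℂ} (hα : IsIrrChar G α) (hβ : IsIrrChar G β) :
    charInner G α β = if α = β then 1 else 0 := by
  obtain ⟨V, hV, rfl⟩ := hα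
  obtain ⟨W, hW, rfl⟩ := hβ
  have : Invertible (Nat.card G : ℂ) := invertibleOfNonzero (NeZero.ne _)
  have horth (W : FDRep ℂ G) [CategoryTheory.Simple W] :
      charInner G V.character W.character = if Nonempty (V ≅ W) then 1 else 0 := by
    rw [← FDRep.char_orthonormal, charInner, Nat.card_eq_fintype_card]
    exact congrArg _ (Finset.sum_congr rfl fun g _ ↦
      congrArg _ (character_apply_inv W.ρ g).symm)
  split_ifs with h
  · rw [← h, horth, if_pos ⟨CategoryTheory.Iso.refl V⟩]
  · rw [horth, if_neg fun ⟨e⟩ ↦ h (FDRep.char_iso e)]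

variable (G) in
theorem finite_setOf_isIrrChar : {α : G → ℂ | IsIrrChar G α}.Finite := by
  let φ (β : G → ℂ) : Dual ℂ (G → ℂ) :=
    (Fintype.card G : ℂ)⁻¹ • ∑ g, starRingEnd ℂ (β g) • LinearMap.proj g
  have hφ (α β : G → ℂ) : φ β α = charInner G α β := by
    simp [φ, charInner, mul_comm]
  have hli : LinearIndependent ℂ ((↑) : {α : G → ℂ | IsIrrChar G α} → G → ℂ) := by
    refine .of_pairwise_dual_eq_zero_one _ (fun β ↦ φ β) (fun β α h ↦ ?_) fun α ↦ ?_
    · exact (hφ α β).trans ((charInner_eq_ite α.2 β.2).trans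
        (if_neg fun hαβ ↦ h (Subtype.ext hαβ.symm)))
    · rw [hφ, charInner_eq_ite α.2 α.2, if_pos rfl]
  exact hli.setFinite

end ComplexCharacters

section Constituents

theorem invariants_eq_top_of_forall_character_eq {k G V : Type*} [Field k] [CharZero k] [Group G]
    [Finite G] [AddCommGroup V] [Module k V] [FiniteDimensional k V] {ρ : Representation k G V}
    (h : ∀ g, ρ.character g = ρ.character 1) : ρ.invariants = ⊤ := by
  have := Fintype.ofFinite G
  have : Invertible (Nat.card G : k) := invertibleOfNonzero (NeZero.ne _)
  have hdim : (finrank k ρ.invariants : k) = finrank k V := by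
    rw [← card_inv_mul_sum_char_eq_finrank]
    simp [h]
  exact Submodule.eq_top_of_finrank_eq (Nat.cast_injective hdim)

variable {G : Type} [Group G] [Fintype G]

/-- The irreducible constituents of the class function `ψ` whose kernel does not contain `N`.
For `N = ⊤` these are the non-principal constituents. -/
def constituentsNontrivialOn (ψ : G → ℂ) (N : Subgroup G) : Set (G → ℂ) :=
  {α | IsIrrChar G α ∧ (∃ n ∈ N, α n ≠ α 1) ∧ charInner G ψ α ≠ 0}

theorem finite_constituentsNontrivialOn (ψ : G → ℂ) (N : Subgroup G) :
    (constituentsNontrivialOn ψ N).Finite :=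
  (finite_setOf_isIrrChar G).subset fun _ h ↦ h.1

theorem constituentsNontrivialOn_mono (ψ : G → ℂ) {M N : Subgroup G} (h : M ≤ N) :
    constituentsNontrivialOn ψ M ⊆ constituentsNontrivialOn ψ N :=
  fun _ ⟨hα, ⟨n, hn, hne⟩, hψ⟩ ↦ ⟨hα, ⟨n, h hn, hne⟩, hψ⟩

theorem charInner_character_toRepresentation_ne_zero {V : Type*} [AddCommGroup V] [Module ℂ V]
    [FiniteDimensional ℂ V] {ρ : Representation ℂ G V} {U : Subrepresentation ρ} (hU : U ≠ ⊥) :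
    charInner G ρ.character U.toRepresentation.character ≠ 0 := by
  let ι : IntertwiningMap U.toRepresentation ρ := ⟨U.toSubmodule.subtype, fun _ ↦ rfl⟩
  have hι : ι ≠ 0 := fun h ↦ hU <| Subrepresentation.toSubmodule_injective <|
    (Submodule.eq_bot_iff _).2 fun v hv ↦ DFunLike.congr_fun h (⟨v, hv⟩ : U.toSubmodule)
  have := Module.Finite.equiv (invariantsEquivIntertwiningMap U.toRepresentation ρ)
  rw [charInner_character, Nat.cast_ne_zero]
  exact (finrank_pos_iff_exists_ne_zero.2 ⟨ι, hι⟩).ne'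

theorem ncard_constituentsNontrivialOn_lt {V : Type} [AddCommGroup V] [Module ℂ V]
    [FiniteDimensional ℂ V] {ρ : Representation ℂ G V} {M N : Subgroup G} [M.Normal] [N.Normal]
    (hMN : M ≤ N) (h : ¬ invariants (ρ.comp M.subtype) ≤ invariants (ρ.comp N.subtype)) :
    (constituentsNontrivialOn ρ.character M).ncard <
      (constituentsNontrivialOn ρ.character N).ncard := by
  let fixedBy (L : Subgroup G) [L.Normal] : Subrepresentation ρ :=
    ⟨invariants (ρ.comp L.subtype), fun g _ hv ↦ le_comap_invariants ρ L g hv⟩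
  obtain ⟨U, hU, hUM, hUN⟩ := exists_isAtom_le_not_le (S := fixedBy M) (T := fixedBy N) h
  have := isIrreducible_toRepresentation_of_isAtom hU
  have hM (m : G) (hm : m ∈ M) :
      U.toRepresentation.character m = U.toRepresentation.character 1 := by
    have : U.toRepresentation m = 1 := LinearMap.ext fun u ↦ Subtype.ext (hUM u.2 ⟨m, hm⟩)
    simp only [character, this, map_one]
  have hN : ∃ n ∈ N, U.toRepresentation.character n ≠ U.toRepresentation.character 1 := by
    by_contra! hconst
    have htop : invariants (U.toRepresentation.comp N.subtype) = ⊤ :=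
      invariants_eq_top_of_forall_character_eq fun n ↦ hconst n n.2
    exact hUN fun u hu n ↦ congrArg Subtype.val
      (htop.ge (Submodule.mem_top (x := (⟨u, hu⟩ : U.toSubmodule))) n)
  refine Set.ncard_lt_ncard ((Set.ssubset_iff_of_subset (constituentsNontrivialOn_mono _ hMN)).2
    ⟨U.toRepresentation.character, ?_, ?_⟩) (finite_constituentsNontrivialOn _ N)
  · exact ⟨isIrrChar_character _, hN, charInner_character_toRepresentation_ne_zero hU.1⟩
  · exact fun ⟨_, ⟨m, hm, hne⟩, _⟩ ↦ hne (hM m hm)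

theorem ncard_constituentsNontrivialOn_top_le_etaChar (χ : G → ℂ) :
    (constituentsNontrivialOn (fun g ↦ χ g * starRingEnd ℂ (χ g)) ⊤).ncard ≤ etaChar G χ := by
  refine Set.ncard_le_ncard ?_ ((finite_setOf_isIrrChar G).subset fun _ h ↦ h.1)
  rintro α ⟨hα, ⟨n, -, hne⟩, hχ⟩
  exact ⟨hα, fun h ↦ hne (by rw [h]), hχ⟩

end Constituents

section ConstituentDegrees

variable {k G H V W : Type*} [Field k] [Group G] [Group H] [AddCommGroup V] [Module k V]
  [AddCommGroup W] [Module k W] {ρ : Representation k G V} {M N : Subgroup G} {d p : ℕ}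

theorem invtSubmodule_comp_range_subtype (φ : H →* G) :
    invtSubmodule (ρ.comp φ.range.subtype) = invtSubmodule (ρ.comp φ) := by
  refine SetLike.ext fun S ↦ ?_
  simp [mem_invtSubmodule]

theorem range_comp_subtype_comap {φ : H →* G} (hM : M ≤ φ.range) :
    (φ.comp (M.comap φ).subtype).range = M := by
  rw [MonoidHom.range_comp, Subgroup.range_subtype, Subgroup.map_comap_eq_self hM]

theorem subgroupOf_sup_zpowers_eq_top [M.Normal] {x : N}
    (h : N ≤ M ⊔ Subgroup.zpowers (x : G)) : M.subgroupOf N ⊔ Subgroup.zpowers x = ⊤ := by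
  refine (Subgroup.eq_top_iff' _).2 fun n ↦ ?_
  obtain ⟨m, hm, _, ⟨i, rfl⟩, hn⟩ := Subgroup.mem_sup_of_normal_left.1 (h n.2)
  have hm' : ((n * (x ^ i)⁻¹ : N) : G) = m := by
    simp [← hn]
  rw [← inv_mul_cancel_right n (x ^ i)]
  exact Subgroup.mul_mem_sup (Subgroup.mem_subgroupOf.2 (hm' ▸ hm)) ⟨i, rfl⟩

/-- `d` is the degree of an irreducible constituent of the restriction of `ρ` to `N`, realised as
a minimal nonzero `N`-invariant subspace of `V`. -/
def IsConstituentDegree (ρ : Representation k G V) (N : Subgroup G) (d : ℕ) : Prop :=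
  ∃ U : Subrepresentation (ρ.comp N.subtype), IsAtom U ∧ finrank k U.toSubmodule = d

theorem IsConstituentDegree.ne_zero [FiniteDimensional k V] (h : IsConstituentDegree ρ N d) :
    d ≠ 0 := by
  obtain ⟨U, hU, rfl⟩ := h
  exact Submodule.finrank_eq_zero.not.2 (isAtom_iff_forall_mem_invtSubmodule.1 hU).1

theorem isConstituentDegree_finrank {σ : Representation k H W} [σ.IsIrreducible] {φ : H →* G}
    (hφ : φ.range = N) (f : IntertwiningMap σ (ρ.comp φ)) (hf : Function.Injective f) :
    IsConstituentDegree ρ N (finrank k W) := by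
  subst hφ
  have := nontrivial_of_isIrreducible σ
  have hinvt {S : Submodule k W} :
      S.map f.toLinearMap ∈ invtSubmodule (ρ.comp φ.range.subtype) ↔ S ∈ σ.invtSubmodule := by
    rw [invtSubmodule_comp_range_subtype, map_mem_invtSubmodule_iff f hf]
  have htop : (⊤ : Submodule k W) ∈ σ.invtSubmodule :=
    σ.mem_invtSubmodule.2 fun _ _ _ ↦ Submodule.mem_top
  refine ⟨⟨(⊤ : Submodule k W).map f.toLinearMap, (mem_invtSubmodule _).1 (hinvt.2 htop)⟩,
    isAtom_iff_forall_mem_invtSubmodule.2 ⟨fun h ↦ ?_, fun T hT hle ↦ ?_⟩, ?_⟩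
  · exact top_ne_bot (Submodule.map_injective_of_injective hf (h.trans (Submodule.map_bot _).symm))
  · obtain ⟨S, rfl⟩ : ∃ S : Submodule k W, S.map f.toLinearMap = T :=
      ⟨_, Submodule.map_comap_eq_self (hle.trans LinearMap.map_le_range)⟩
    refine (isIrreducible_iff_forall_mem_invtSubmodule.1 ‹_› S (hinvt.1 hT)).imp ?_ ?_
    · rintro rfl
      exact Submodule.map_bot _
    · rintro rfl
      rfl
  · exact (Submodule.equivMapOfInjective _ hf ⊤).finrank_eq.symm.trans (finrank_top k W)

theorem IsConstituentDegree.of_commutant_le [Finite M] [NeZero (Nat.card M : k)] (hMN : M ≤ N)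
    (h : commutant ρ M ≤ commutant ρ N) (hd : IsConstituentDegree ρ N d) :
    IsConstituentDegree ρ M d := by
  obtain ⟨U, hU, rfl⟩ := hd
  obtain ⟨hbot, hmin⟩ := isAtom_iff_forall_mem_invtSubmodule.1 hU
  exact ⟨⟨U.toSubmodule, fun m _ hv ↦ U.apply_mem_toSubmodule ⟨m, hMN m.2⟩ hv⟩,
    isAtom_iff_forall_mem_invtSubmodule.2
      ⟨hbot, fun S hS ↦ hmin S (invtSubmodule_le_of_commutant_le h hS)⟩, rfl⟩

variable [Finite G] [IsAlgClosed k] [FiniteDimensional k V] [M.Normal]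

theorem IsConstituentDegree.eq_one_of_commutant_bot_le {x : G} (hx : x ∈ N)
    (hgen : N ≤ M ⊔ Subgroup.zpowers x) (h : commutant ρ ⊥ ≤ commutant ρ M)
    (hd : IsConstituentDegree ρ N d) : d = 1 := by
  obtain ⟨U, hU, rfl⟩ := hd
  have := isIrreducible_toRepresentation_of_isAtom hU
  refine finrank_eq_one_of_forall_mem_invtSubmodule (σ := U.toRepresentation)
    (subgroupOf_sup_zpowers_eq_top (x := ⟨x, hx⟩) hgen) fun S ↦ ?_
  have hS := (mem_invtSubmodule _).1
    (mem_invtSubmodule_of_commutant_bot_le h (S.map U.toSubmodule.subtype))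
  refine (mem_invtSubmodule _).2 fun m u hu ↦ ?_
  obtain ⟨u', hu', heq⟩ := hS ⟨_, m.2⟩ ⟨u, hu, rfl⟩
  obtain rfl : u' = U.toRepresentation m u := Subtype.ext heq
  exact hu'

theorem IsConstituentDegree.or_exists_eq_mul [CharZero k] (hMN : M ≤ N) {x : G} (hx : x ∈ N)
    (hgen : N ≤ M ⊔ Subgroup.zpowers x) (hp : p.Prime) (hxp : x ^ p ∈ M)
    (hd : IsConstituentDegree ρ N d) :
    IsConstituentDegree ρ M d ∨ ∃ e, IsConstituentDegree ρ M e ∧ d = p * e := by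
  obtain ⟨U, hU, rfl⟩ := hd
  have := isIrreducible_toRepresentation_of_isAtom hU
  have hrange : (N.subtype.comp (M.subgroupOf N).subtype).range = M :=
    range_comp_subtype_comap (by rwa [Subgroup.range_subtype])
  rcases isIrreducible_or_exists_finrank_eq_mul (σ := U.toRepresentation)
    (subgroupOf_sup_zpowers_eq_top (x := ⟨x, hx⟩) hgen) hp hxp with hirr | ⟨T, hT, hdim⟩
  · exact .inl (isConstituentDegree_finrank
      (σ := U.toRepresentation.comp (M.subgroupOf N).subtype) hrange
      ⟨U.toSubmodule.subtype, fun _ ↦ rfl⟩ U.toSubmodule.subtype_injective)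
  · exact .inr ⟨_, isConstituentDegree_finrank (σ := T.toRepresentation) hrange
      ⟨U.toSubmodule.subtype ∘ₗ T.toSubmodule.subtype, fun _ ↦ rfl⟩
      (U.toSubmodule.subtype_injective.comp T.toSubmodule.subtype_injective), hdim⟩

end ConstituentDegrees

theorem length_primeFactorsList_lt_ncard_constituentsNontrivialOn {G V : Type} [Group G]
    [Fintype G] [AddCommGroup V] [Module ℂ V] [FiniteDimensional ℂ V] {ρ : Representation ℂ G V}
    (hG : IsSupersolvableGroup G) (N : Subgroup G) [hnormal : N.Normal]
    (hN : ¬ commutant ρ ⊥ ≤ commutant ρ N) {d : ℕ} (hd : IsConstituentDegree ρ N d) :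
    d.primeFactorsList.length < (constituentsNontrivialOn (linHom ρ ρ).character N).ncard := by
  induction N using WellFoundedLT.induction generalizing hnormal d with
  | ind N ih =>
  have hbot : N ≠ ⊥ := by
    rintro rfl
    exact hN le_rfl
  obtain ⟨M, hMnormal, hMN, x, hx, hgen, p, hp, hxp⟩ :=
    exists_normal_lt_of_isSupersolvableGroup hG hbot
  by_cases hM : commutant ρ ⊥ ≤ commutant ρ M
  · rw [hd.eq_one_of_commutant_bot_le hx hgen hM, Nat.primeFactorsList_one]
    exact (Nat.zero_le _).trans_lt (ncard_constituentsNontrivialOn_lt bot_le hN)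
  by_cases hle : commutant ρ M ≤ commutant ρ N
  · exact (ih M hMN hM (hd.of_commutant_le hMN.le hle)).trans_le (Set.ncard_le_ncard
      (constituentsNontrivialOn_mono _ hMN.le) (finite_constituentsNontrivialOn _ N))
  have hlt : (constituentsNontrivialOn (linHom ρ ρ).character M).ncard <
      (constituentsNontrivialOn (linHom ρ ρ).character N).ncard :=
    ncard_constituentsNontrivialOn_lt hMN.le hle
  rcases hd.or_exists_eq_mul hMN.le hx hgen hp hxp with hd | ⟨e, he, rfl⟩
  · exact (ih M hMN hM hd).trans hlt
  · rw [(Nat.perm_primeFactorsList_mul hp.ne_zero he.ne_zero).length_eq, List.length_append,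
      Nat.primeFactorsList_prime hp, List.length_singleton, add_comm]
    exact Nat.lt_of_le_of_lt (ih M hMN hM he) hlt

/-- Theorem B, second part: for supersolvable `G` and `χ(1) > 1`, the degree
`χ(1)` is a product of at most `η(χ) - 1` primes counted with multiplicity. -/
theorem omega_degree_le_eta_sub_one (G : Type) [Group G] [Fintype G]
    (hss : IsSupersolvableGroup G) (χ : G → ℂ) (hχ : IsIrrChar G χ)
    (d : ℕ) (hd : χ 1 = (d : ℂ)) (hdeg : 1 < d) :
    d.primeFactorsList.length ≤ etaChar G χ - 1 := by
  obtain ⟨V, hV, rfl⟩ := hχ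
  have := simple_iff_isIrreducible.1 hV
  have hfinrank : finrank ℂ V = d := Nat.cast_injective ((FDRep.char_one V).symm.trans hd)
  have hconst : IsConstituentDegree V.ρ ⊤ d :=
    hfinrank ▸ isConstituentDegree_finrank (φ := MonoidHom.id G)
      (MonoidHom.range_eq_top.2 Function.surjective_id) (IntertwiningMap.id V.ρ)
      Function.injective_id
  have hcomm : ¬ commutant V.ρ ⊥ ≤ commutant V.ρ ⊤ := fun h ↦
    hdeg.ne' (hconst.eq_one_of_commutant_bot_le (Subgroup.mem_top 1) le_sup_left h)
  have hlt := length_primeFactorsList_lt_ncard_constituentsNontrivialOn hss ⊤ hcomm hconst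
  rw [character_linHom_self] at hlt
  exact Nat.le_sub_one_of_lt
    (hlt.trans_le (ncard_constituentsNontrivialOn_top_le_etaChar V.character))
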